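/- If p is a prime number with p ≡ 1 (mod 4), then T_p, the period length of the continued fraction expansion of √p, is odd. -/

import Mathlib

/-- The sequence of complete quotients of the continued fraction of `x`:
`α₀ = x`, `α_{k+1} = 1/(αₖ - ⌊αₖ⌋)`. -/
noncomputable def cfAlpha (x : ℝ) : ℕ → ℝ
  | 0 => x
  | k + 1 => 1 / (cfAlpha x k - (⌊cfAlpha x k⌋ : ℝ))

/-- The partial quotients of the continued fraction of `x`: `aₖ = ⌊αₖ⌋`. -/
noncomputable def cfA (x : ℝ) (k : ℕ) : ℤ :=
  ⌊cfAlpha x k⌋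

/-- The length of the minimal period of the continued fraction of `x`:
the least `l > 0` with `a_{k+l} = a_k` for all `k ≥ 1`. -/
noncomputable def cfPeriod (x : ℝ) : ℕ :=
  sInf {l : ℕ | 0 < l ∧ ∀ k : ℕ, 1 ≤ k → cfA x (k + l) = cfA x k}

/-!
Write the complete quotients of `√D` as `(Pₖ + √D) / Qₖ` and let a state record `(Qₖ₋₁, Pₖ, Qₖ)`.
Starting from `⌊√D⌋ + √D` all states are reduced; there are finitely many of them, and reversing a
state, `(Q', P, Q) ↦ (Q, P, Q')`, conjugates the continued fraction step to its inverse. Hence the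
initial state has a purely periodic orbit with a palindromic period, and an even period `2m` makes
the `m`-th state `(Q', P, Q)` satisfy `Q ∣ 2P`, so that `Q ∣ 2D`. For a prime `D = p` this forces
`Q = 1`, which only happens at the initial state, or `Q = 2`; for `p ≡ 1 [MOD 4]` the latter would
make `p = P² + 2Q'` with `Q'` even, although the form `Q' x² + 2P xy - Q y²` is primitive, as it is
equivalent to the form `(p - r²) x² + 2r xy - y²` of the initial state, where `r = ⌊√p⌋`.
-/

open Function

section Dynamics

variable {α : Type*} {f r : α → α} {x : α}

theorem iterate_apply_reverse_iterate (h : ∀ y, f (r (f y)) = r y) (n : ℕ) (y : α) :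
    f^[n] (r (f^[n] y)) = r y := by
  induction n with
  | zero => rfl
  | succ n ih => rw [iterate_succ_apply, iterate_succ_apply', h, ih]

theorem apply_iterate_half_period_eq_reverse (hf : Injective f) (h : ∀ y, f (r (f y)) = r y)
    (hx : f x = r x) {m : ℕ} (hm : IsPeriodicPt f (m + m) x) :
    f (f^[m] x) = r (f^[m] x) := by
  apply hf.iterate m
  calc f^[m] (f (f^[m] x)) = f (f^[m + m] x) := by
        rw [← iterate_succ_apply, iterate_succ_apply', iterate_add_apply]
    _ = f x := congrArg f hm
    _ = r x := hx
    _ = f^[m] (r (f^[m] x)) := (iterate_apply_reverse_iterate h m x).symm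

theorem odd_minimalPeriod_of_reversible (hf : Injective f) (h : ∀ y, f (r (f y)) = r y)
    (hper : x ∈ periodicPts f) (hx : f x = r x)
    (huniq : ∀ n, f (f^[n] x) = r (f^[n] x) → f^[n] x = x) : Odd (minimalPeriod f x) := by
  by_contra hodd
  obtain ⟨m, hm⟩ := Nat.not_odd_iff_even.mp hodd
  have hpos := minimalPeriod_pos_of_mem_periodicPts hper
  have hhalf : IsPeriodicPt f m x :=
    huniq m (apply_iterate_half_period_eq_reverse hf h hx (hm ▸ isPeriodicPt_minimalPeriod f x))
  have hle := hhalf.minimalPeriod_le (by lia)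
  lia

theorem sInf_isPeriodicPt_eq_minimalPeriod :
    sInf {n : ℕ | 0 < n ∧ IsPeriodicPt f n x} = minimalPeriod f x := by
  by_cases hx : x ∈ periodicPts f
  · refine le_antisymm (Nat.sInf_le ?_) (le_csInf hx fun n hn => hn.2.minimalPeriod_le hn.1)
    exact ⟨minimalPeriod_pos_of_mem_periodicPts hx, isPeriodicPt_minimalPeriod f x⟩
  · rw [minimalPeriod_eq_zero_of_notMem_periodicPts hx, Nat.sInf_eq_zero]
    exact Or.inr (Set.not_nonempty_iff_eq_empty.mp hx)

theorem minimalPeriod_eq_of_semiconj {β : Type*} {g : β → β} {φ : α → β} (hφ : Injective φ)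
    (h : Semiconj φ f g) : minimalPeriod g (φ x) = minimalPeriod f x :=
  minimalPeriod_eq_minimalPeriod_iff.mpr fun n => by
    rw [IsPeriodicPt, IsFixedPt, ← (h.iterate_right n).eq, hφ.eq_iff, IsPeriodicPt, IsFixedPt]

end Dynamics

section CompleteQuotient

/-- The map `y ↦ 1 / (y - ⌊y⌋)` from one complete quotient of a continued fraction to the next,
with value `0` at the integers. -/
noncomputable def nextQuotient (y : ℝ) : ℝ :=
  (Int.fract y)⁻¹

theorem nextQuotient_add_intCast (y : ℝ) (n : ℤ) : nextQuotient (y + n) = nextQuotient y := by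
  simp only [nextQuotient, Int.fract_add_intCast]

theorem cfAlpha_eq_iterate (x : ℝ) (k : ℕ) : cfAlpha x k = nextQuotient^[k] x := by
  induction k with
  | zero => rfl
  | succ k ih => rw [iterate_succ_apply', ← ih, cfAlpha, one_div, nextQuotient, Int.fract]

theorem cfA_iterate_nextQuotient (x : ℝ) (m k : ℕ) :
    cfA (nextQuotient^[m] x) k = cfA x (k + m) := by
  simp only [cfA, cfAlpha_eq_iterate, iterate_add_apply]

theorem convergent_eq_of_cfA_eq {x y : ℝ} (h : ∀ k, cfA x k = cfA y k) (n : ℕ) :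
    x.convergent n = y.convergent n := by
  have hfloor : ⌊x⌋ = ⌊y⌋ := h 0
  induction n generalizing x y with
  | zero => rw [Real.convergent_zero, Real.convergent_zero, hfloor]
  | succ n ih =>
    have hnext : ∀ k, cfA (nextQuotient x) k = cfA (nextQuotient y) k := fun k =>
      (cfA_iterate_nextQuotient x 1 k).trans
        ((h (k + 1)).trans (cfA_iterate_nextQuotient y 1 k).symm)
    rw [Real.convergent_succ, Real.convergent_succ, hfloor]
    exact congrArg (fun q : ℚ => (⌊y⌋ : ℚ) + q⁻¹) (ih hnext (hnext 0))

theorem eq_of_cfA_eq {x y : ℝ} (h : ∀ k, cfA x k = cfA y k) : x = y := by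
  have hconvs : (GenContFract.of x).convs = (GenContFract.of y).convs := by
    funext n
    rw [Real.convs_eq_convergent, Real.convs_eq_convergent, convergent_eq_of_cfA_eq h]
  exact tendsto_nhds_unique (GenContFract.of_convergence x)
    (hconvs ▸ GenContFract.of_convergence y)

theorem isPeriodicPt_nextQuotient_iff (x : ℝ) (l : ℕ) :
    IsPeriodicPt nextQuotient l (nextQuotient x) ↔ ∀ k, 1 ≤ k → cfA x (k + l) = cfA x k := by
  have hshift : ∀ k, cfA (nextQuotient^[l] (nextQuotient x)) k = cfA x (k + 1 + l) := fun k => by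
    rw [← iterate_succ_apply, cfA_iterate_nextQuotient, add_right_comm, add_assoc]
  constructor
  · intro hl k hk
    obtain ⟨j, rfl⟩ := Nat.exists_eq_add_of_le' hk
    rw [← hshift, hl.eq]
    exact cfA_iterate_nextQuotient x 1 j
  · intro h
    refine eq_of_cfA_eq fun k => ?_
    rw [hshift, h (k + 1) (by lia)]
    exact (cfA_iterate_nextQuotient x 1 k).symm

theorem cfPeriod_eq_minimalPeriod (x : ℝ) :
    cfPeriod x = minimalPeriod nextQuotient (nextQuotient x) := by
  simp only [cfPeriod, ← isPeriodicPt_nextQuotient_iff, sInf_isPeriodicPt_eq_minimalPeriod]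

end CompleteQuotient

/-- A reduced quadratic surd `(num + √D) / den` together with the integer
`prevDen = (D - num ^ 2) / den`, the denominator of the preceding complete quotient. The surd is
reduced in the sense that it exceeds `1` and its conjugate lies in `(-1, 0)`; these conditions are
expressed through `⌊√D⌋`. -/
@[ext]
structure ReducedSurd (D : ℕ) where
  prevDen : ℤ
  num : ℤ
  den : ℤ
  prevDen_pos : 0 < prevDen
  den_pos : 0 < den
  num_le : num ≤ D.sqrt
  sqrt_lt_num_add_prevDen : D.sqrt < num + prevDen
  sqrt_lt_num_add_den : D.sqrt < num + den
  num_sq_add : num ^ 2 + prevDen * den = D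

theorem sq_natSqrt_lt {D : ℕ} (hD : ¬IsSquare D) : (D.sqrt : ℤ) ^ 2 < D := by
  have hne : D.sqrt ^ 2 ≠ D := fun h => hD ⟨D.sqrt, by rw [← sq, h]⟩
  exact_mod_cast D.sqrt_le'.lt_of_ne hne

theorem lt_sq_succ_natSqrt (D : ℕ) : (D : ℤ) < (D.sqrt + 1) ^ 2 := by
  exact_mod_cast D.lt_succ_sqrt'

namespace ReducedSurd

section Basic

variable {D : ℕ} (s : ReducedSurd D)

variable {s} in
theorem ext_num_den {t : ReducedSurd D} (hnum : s.num = t.num) (hden : s.den = t.den) :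
    s = t := by
  have hmul : s.prevDen * s.den = t.prevDen * s.den := by
    linear_combination s.num_sq_add - t.num_sq_add - (s.num + t.num) * hnum - t.prevDen * hden
  exact ReducedSurd.ext (mul_right_cancel₀ s.den_pos.ne' hmul) hnum hden

theorem num_pos : 0 < s.num := by
  by_contra! hnum
  have := s.sqrt_lt_num_add_prevDen
  have := s.sqrt_lt_num_add_den
  have hprod : ((D.sqrt : ℤ) + 1 - s.num) * (D.sqrt + 1 - s.num) ≤ s.prevDen * s.den :=
    mul_le_mul (by lia) (by lia) (by lia) s.prevDen_pos.le
  nlinarith [lt_sq_succ_natSqrt D, s.num_sq_add]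

theorem den_le_num_add_sqrt : s.den ≤ s.num + D.sqrt := by
  by_contra! hden
  have hprod : ((D.sqrt : ℤ) + 1 - s.num) * (s.num + D.sqrt + 1) ≤ s.prevDen * s.den :=
    mul_le_mul (by linarith [s.sqrt_lt_num_add_prevDen]) (by lia) (by linarith [s.num_pos])
      s.prevDen_pos.le
  linarith [lt_sq_succ_natSqrt D, s.num_sq_add]

instance : Finite (ReducedSurd D) := by
  let toPair : ReducedSurd D → Set.Icc (0 : ℤ) D.sqrt × Set.Icc (0 : ℤ) (2 * D.sqrt) := fun s =>
    (⟨s.num, s.num_pos.le, s.num_le⟩,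
      ⟨s.den, s.den_pos.le, by linarith [s.den_le_num_add_sqrt, s.num_le]⟩)
  exact Finite.of_injective toPair fun s t h =>
    ext_num_den (congrArg (fun q => (q.1 : ℤ)) h) (congrArg (fun q => (q.2 : ℤ)) h)

/-- The reduced surd `⌊√D⌋ + √D`, whose continued fraction differs from that of `√D` only in its
first term. -/
@[simps]
def start (hD : ¬IsSquare D) : ReducedSurd D where
  prevDen := D - D.sqrt ^ 2
  num := D.sqrt
  den := 1
  prevDen_pos := sub_pos.mpr (sq_natSqrt_lt hD)
  den_pos := one_pos
  num_le := le_rfl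
  sqrt_lt_num_add_prevDen := lt_add_of_pos_right _ (sub_pos.mpr (sq_natSqrt_lt hD))
  sqrt_lt_num_add_den := lt_add_one _
  num_sq_add := by ring

/-- The reduced surd `-1 / ᾱ`, where `ᾱ = (num - √D) / den` is the conjugate of `s`. It reverses the
direction in which the continued fraction is read. -/
@[simps]
def rev : ReducedSurd D where
  prevDen := s.den
  num := s.num
  den := s.prevDen
  prevDen_pos := s.den_pos
  den_pos := s.prevDen_pos
  num_le := s.num_le
  sqrt_lt_num_add_prevDen := s.sqrt_lt_num_add_den
  sqrt_lt_num_add_den := s.sqrt_lt_num_add_prevDen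
  num_sq_add := by rw [mul_comm, s.num_sq_add]

/-- The partial quotient `⌊(num + √D) / den⌋` of the surd. -/
def quot : ℤ :=
  (s.num + D.sqrt) / s.den

/-- The numerator of the complete quotient following `s`: the classical recurrence
`Pₖ₊₁ = aₖ Qₖ - Pₖ`. -/
def nextNum : ℤ :=
  s.quot * s.den - s.num

/-- The denominator of the complete quotient following `s`: the classical recurrence
`Qₖ₊₁ = Qₖ₋₁ + aₖ (Pₖ - Pₖ₊₁)`. -/
def nextDen : ℤ :=
  s.prevDen + s.quot * (s.num - s.nextNum)

theorem den_le_quot_mul_den : s.den ≤ s.quot * s.den :=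
  le_mul_of_one_le_left s.den_pos.le <|
    (Int.le_ediv_iff_mul_le s.den_pos).mpr ((one_mul s.den).trans_le s.den_le_num_add_sqrt)

theorem nextNum_le : s.nextNum ≤ D.sqrt :=
  sub_le_iff_le_add'.mpr (Int.ediv_mul_le _ s.den_pos.ne')

theorem sqrt_lt_nextNum_add_den : D.sqrt < s.nextNum + s.den := by
  have hlt : s.num + D.sqrt < (s.quot + 1) * s.den := Int.lt_ediv_add_one_mul_self _ s.den_pos
  rw [nextNum]
  linarith

theorem den_le_nextNum_add_sqrt : s.den ≤ s.nextNum + D.sqrt := by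
  rw [nextNum]
  linarith [s.den_le_quot_mul_den, s.num_le]

theorem nextNum_sq_add : s.nextNum ^ 2 + s.den * s.nextDen = D := by
  rw [nextDen, nextNum]
  linear_combination s.num_sq_add

theorem nextDen_pos (hD : ¬IsSquare D) : 0 < s.nextDen := by
  have hsq : s.nextNum ^ 2 ≤ (D.sqrt : ℤ) ^ 2 :=
    sq_le_sq' (by linarith [s.den_le_nextNum_add_sqrt, s.den_pos]) s.nextNum_le
  exact pos_of_mul_pos_right (by linarith [s.nextNum_sq_add, sq_natSqrt_lt hD]) s.den_pos.le

theorem sqrt_lt_nextNum_add_nextDen (hD : ¬IsSquare D) : D.sqrt < s.nextNum + s.nextDen := by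
  by_contra! hle
  have hprod : s.den * s.nextDen ≤ (s.nextNum + D.sqrt) * (D.sqrt - s.nextNum) :=
    mul_le_mul s.den_le_nextNum_add_sqrt (by linarith) (s.nextDen_pos hD).le
      (by linarith [s.den_le_nextNum_add_sqrt, s.den_pos])
  linarith [sq_natSqrt_lt hD, s.nextNum_sq_add]

/-- The next complete quotient of the continued fraction of a reduced surd. -/
@[simps]
def next (hD : ¬IsSquare D) (s : ReducedSurd D) : ReducedSurd D where
  prevDen := s.den
  num := s.nextNum
  den := s.nextDen
  prevDen_pos := s.den_pos
  den_pos := s.nextDen_pos hD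
  num_le := s.nextNum_le
  sqrt_lt_num_add_prevDen := s.sqrt_lt_nextNum_add_den
  sqrt_lt_num_add_den := s.sqrt_lt_nextNum_add_nextDen hD
  num_sq_add := s.nextNum_sq_add

theorem quot_rev_next (hD : ¬IsSquare D) : (s.next hD).rev.quot = s.quot := by
  have hzero : (D.sqrt - s.num) / s.den = 0 :=
    Int.ediv_eq_zero_of_lt (sub_nonneg.mpr s.num_le)
      (sub_lt_iff_lt_add'.mpr s.sqrt_lt_num_add_den)
  calc (s.nextNum + D.sqrt) / s.den = (D.sqrt - s.num + s.quot * s.den) / s.den := by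
        rw [nextNum]; ring_nf
    _ = s.quot := by rw [Int.add_mul_ediv_right _ _ s.den_pos.ne', hzero, zero_add]

theorem next_rev_next (hD : ¬IsSquare D) : (s.next hD).rev.next hD = s.rev := by
  have hnum : (s.next hD).rev.nextNum = s.num := by
    rw [nextNum, quot_rev_next, rev_den, next_prevDen, rev_num, next_num, nextNum]
    ring
  refine ext_num_den hnum ?_
  rw [next_den, nextDen, hnum, quot_rev_next, rev_prevDen, next_den, rev_num, next_num, nextDen,
    rev_den]
  ring

theorem rev_injective : Injective (rev : ReducedSurd D → ReducedSurd D) :=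
  Involutive.injective fun _ => rfl

theorem next_injective (hD : ¬IsSquare D) : Injective (next hD) := by
  have hcomp : (next hD ∘ rev) ∘ next hD = rev := funext (next_rev_next · hD)
  exact Injective.of_comp (hcomp ▸ rev_injective)

theorem next_start (hD : ¬IsSquare D) : (start hD).next hD = (start hD).rev := by
  have hquot : (start hD).quot = 2 * D.sqrt := by
    rw [quot, start_num, start_den, Int.ediv_one, two_mul]
  have hnum : (start hD).nextNum = D.sqrt := by
    rw [nextNum, hquot, start_den, start_num]
    ring
  refine ext_num_den hnum ?_
  rw [next_den, nextDen, hnum, start_num, sub_self, mul_zero, add_zero, rev_den]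

theorem eq_start_of_den_eq_one (hD : ¬IsSquare D) (hs : s.den = 1) : s = start hD := by
  have hlt := hs ▸ s.sqrt_lt_num_add_den
  exact ext_num_den (s.num_le.antisymm (Int.lt_add_one_iff.mp hlt)) hs

theorem quot_mul_den_of_next_eq_rev {hD : ¬IsSquare D} (hs : s.next hD = s.rev) :
    s.quot * s.den = 2 * s.num := by
  have hnum : s.quot * s.den - s.num = s.num := congrArg num hs
  linarith

theorem den_dvd_of_next_eq_rev {hD : ¬IsSquare D} (hs : s.next hD = s.rev) :
    s.den ∣ D * 2 := by
  refine ⟨s.quot * s.num + 2 * s.prevDen, ?_⟩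
  linear_combination -2 * s.num_sq_add - s.num * s.quot_mul_den_of_next_eq_rev hs

theorem den_le_of_next_eq_rev {hD : ¬IsSquare D} (hs : s.next hD = s.rev) :
    s.den ≤ 2 * D.sqrt := by
  linarith [s.den_le_quot_mul_den, s.quot_mul_den_of_next_eq_rev hs, s.num_le]

theorem den_eq_one_or_two_of_next_eq_rev {p : ℕ} (hp : p.Prime) {hsq : ¬IsSquare p}
    {s : ReducedSurd p} (hs : s.next hsq = s.rev) : s.den = 1 ∨ s.den = 2 := by
  have hle : s.den ≤ 2 := by
    by_cases hdvd : (p : ℤ) ∣ s.den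
    · have hp_le := Int.le_of_dvd s.den_pos hdvd
      have hden_le := s.den_le_of_next_eq_rev hs
      have hsqrt : (p.sqrt : ℤ) < 2 := by nlinarith [sq_natSqrt_lt hsq]
      linarith
    · have hcop : IsCoprime s.den p :=
        ((Nat.prime_iff_prime_int.mp hp).coprime_iff_not_dvd.mpr hdvd).symm
      exact Int.le_of_dvd two_pos (hcop.dvd_of_dvd_mul_left (s.den_dvd_of_next_eq_rev hs))
  have := s.den_pos
  lia

/-- Primitivity of the binary quadratic form `prevDen x² + 2 num xy - den y²` of discriminant
`4D` attached to `s`. -/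
def IsPrimitive : Prop :=
  ∀ d : ℤ, d ∣ s.prevDen → d ∣ 2 * s.num → d ∣ s.den → IsUnit d

theorem isPrimitive_start (hD : ¬IsSquare D) : (start hD).IsPrimitive :=
  fun _ _ _ hden => isUnit_of_dvd_one hden

variable {s} in
theorem IsPrimitive.next (hs : s.IsPrimitive) (hD : ¬IsSquare D) : (s.next hD).IsPrimitive := by
  intro d (hden : d ∣ s.den) (hnextNum : d ∣ 2 * s.nextNum) (hnextDen : d ∣ s.nextDen)
  have hnum : d ∣ 2 * s.num := by
    have heq : 2 * s.num = 2 * s.quot * s.den - 2 * s.nextNum := by rw [nextNum]; ring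
    exact heq ▸ (hden.mul_left _).sub hnextNum
  have hprevDen : d ∣ s.prevDen := by
    have heq : s.prevDen = s.nextDen - s.quot * (2 * s.num) + s.quot ^ 2 * s.den := by
      rw [nextDen, nextNum]; ring
    exact heq ▸ (hnextDen.sub (hnum.mul_left _)).add (hden.mul_left _)
  exact hs d hprevDen hnum hden

theorem isPrimitive_iterate_next_start (hD : ¬IsSquare D) (n : ℕ) :
    ((next hD)^[n] (start hD)).IsPrimitive := by
  induction n with
  | zero => exact isPrimitive_start hD
  | succ n ih => rw [iterate_succ_apply']; exact ih.next hD

variable {s} in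
theorem IsPrimitive.den_ne_two (hs : s.IsPrimitive) (hD : D % 4 = 1) : s.den ≠ 2 := by
  intro hden
  have hnorm : s.num ^ 2 + s.prevDen * 2 = D := hden ▸ s.num_sq_add
  have hodd : Odd s.num := by
    have hsq : Odd (s.num ^ 2) := Int.odd_iff.mpr (by lia)
    exact (Int.odd_pow' two_ne_zero).mp hsq
  have hprevDen : 2 ∣ s.prevDen := by
    have := Int.sq_mod_four_eq_one_of_odd hodd
    lia
  exact absurd (hs 2 hprevDen (dvd_mul_right 2 _) hden.symm.dvd) (by decide)

theorem eq_start_of_next_eq_rev {p : ℕ} (hp : p.Prime) (hp4 : p % 4 = 1) {hsq : ¬IsSquare p}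
    {s : ReducedSurd p} (hprim : s.IsPrimitive) (hs : s.next hsq = s.rev) : s = start hsq :=
  s.eq_start_of_den_eq_one hsq <|
    (den_eq_one_or_two_of_next_eq_rev hp hs).resolve_right (hprim.den_ne_two hp4)

end Basic

section Value

variable {D : ℕ} (s : ReducedSurd D)

/-- The real number `(num + √D) / den` denoted by the surd. -/
noncomputable def value : ℝ :=
  (s.num + √D) / s.den

theorem floor_value : ⌊s.value⌋ = s.quot := by
  obtain ⟨n, hn⟩ := Int.eq_ofNat_of_zero_le s.den_pos.le
  rw [value, quot, hn, Int.cast_natCast, Int.floor_div_natCast, Int.floor_intCast_add,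
    Real.floor_real_sqrt_eq_nat_sqrt]

theorem fract_value : Int.fract s.value = (√D - s.nextNum) / s.den := by
  have hden : (s.den : ℝ) ≠ 0 := by exact_mod_cast s.den_pos.ne'
  rw [Int.fract, floor_value, value, nextNum]
  push_cast
  field_simp
  ring

theorem value_next (hD : ¬IsSquare D) : (s.next hD).value = nextQuotient s.value := by
  have hden : (s.nextDen : ℝ) ≠ 0 := by exact_mod_cast (s.nextDen_pos hD).ne'
  have hfract : √D - s.nextNum ≠ 0 :=
    ((irrational_sqrt_natCast_iff.mpr hD).sub_intCast _).ne_zero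
  have hnorm : (s.nextNum : ℝ) ^ 2 + s.den * s.nextDen = D := by
    exact_mod_cast s.nextNum_sq_add
  rw [nextQuotient, fract_value, inv_div, value, next_num, next_den, div_eq_div_iff hden hfract]
  linear_combination Real.sq_sqrt (Nat.cast_nonneg D : (0 : ℝ) ≤ D) - hnorm

theorem value_injective (hD : ¬IsSquare D) : Injective (value : ReducedSurd D → ℝ) := by
  intro s t h
  have hs : (s.den : ℝ) ≠ 0 := by exact_mod_cast s.den_pos.ne'
  have ht : (t.den : ℝ) ≠ 0 := by exact_mod_cast t.den_pos.ne'
  rw [value, value, div_eq_div_iff hs ht] at h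
  have hden : s.den = t.den := by
    by_contra hne
    refine ((irrational_sqrt_natCast_iff.mpr hD).intCast_mul (sub_ne_zero.mpr hne)).ne_int
      (s.num * t.den - t.num * s.den) ?_
    push_cast
    linear_combination -h
  rw [hden] at h
  have hnum : (s.num : ℝ) = t.num := add_right_cancel (mul_right_cancel₀ ht h)
  exact ext_num_den (by exact_mod_cast hnum) hden

theorem value_start (hD : ¬IsSquare D) : (start hD).value = √D + (D.sqrt : ℤ) := by
  rw [value, start_num, start_den, Int.cast_one, div_one, add_comm]

theorem cfPeriod_sqrt_eq_minimalPeriod (hD : ¬IsSquare D) :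
    cfPeriod √D = minimalPeriod (next hD) (start hD) := by
  have hstart : nextQuotient √D = ((start hD).next hD).value := by
    rw [value_next, value_start, nextQuotient_add_intCast]
  have hsemiconj : Semiconj value (next hD) nextQuotient := (value_next · hD)
  rw [cfPeriod_eq_minimalPeriod, hstart,
    minimalPeriod_eq_of_semiconj (value_injective hD) hsemiconj,
    minimalPeriod_apply ((next_injective hD).mem_periodicPts _)]

end Value

end ReducedSurd

theorem stmt_8 (p : ℕ) (hp : p.Prime) (h1 : p % 4 = 1) :
    Odd (cfPeriod (Real.sqrt p)) := by
  have hsq : ¬IsSquare p := hp.prime.not_isSquare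
  have hinj := ReducedSurd.next_injective hsq
  rw [ReducedSurd.cfPeriod_sqrt_eq_minimalPeriod hsq]
  refine odd_minimalPeriod_of_reversible hinj (fun s => s.next_rev_next hsq)
    (hinj.mem_periodicPts _) (ReducedSurd.next_start hsq) fun n hn => ?_
  exact ReducedSurd.eq_start_of_next_eq_rev hp h1
    (ReducedSurd.isPrimitive_iterate_next_start hsq n) hn
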